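/- arXiv:1911.04349 — 2 statements merged into one kernel-verified Lean document; each statement's English description precedes it below -/
import Mathlib

section
/- Fix α with 1/2 < α < 1 and let s > (1−α)/2. Then there exists C > 0 such that for all nonnegative sequences ω⁽¹⁾, ω⁽²⁾, ω⁽³⁾ : ℤ → [0,∞): ( Σ_{n ∈ ℤ} ⟨n⟩^{2s} ( Σ_{(n₁,n₂,n₃) ∈ Γ_n^R} ω⁽¹⁾_{n₁} ω⁽²⁾_{n₂} ω⁽³⁾_{n₃} )² )^{1/2} ≤ C ∏_{j=1}^{3} ‖ω⁽ʲ⁾‖_{ℓ²_s}. -/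
open scoped ENNReal NNReal

/-- `⟨n⟩ = (1+n²)^{1/2}`. -/
noncomputable def jbZ (n : ℤ) : ℝ := Real.sqrt (1 + (n : ℝ) ^ 2)

/-- The weighted `ℓ²_s(ℤ)` norm (valued in `[0,∞]`). -/
noncomputable def l2sZ (s : ℝ) (ω : ℤ → ℝ≥0) : ℝ≥0∞ :=
  (∑' n : ℤ, ENNReal.ofReal (jbZ n ^ (2 * s)) * ((ω n : ℝ≥0∞)) ^ 2) ^ (1/2 : ℝ)

/-- `(n₁,n₂,n₃) ∈ Γ_n^R = Γ_n \ Γ_n^N`. -/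
noncomputable def GammaR (α : ℝ) (n n₁ n₂ n₃ : ℤ) : Prop :=
  n₁ - n₂ + n₃ = n ∧
    ¬((|n₂ - n₁| : ℝ) > |(n₂ : ℝ)| ^ (1 - α) ∧ (|n₂ - n₃| : ℝ) > |(n₂ : ℝ)| ^ (1 - α))

/-!
On `Γ_n^R` the middle frequency is close to one of the outer ones, and by the symmetry
`n₁ ↔ n₃` it suffices to treat `|k| ≤ |m|^β` with `k = n₂ - n₁`, `m = n₂`, `β = 1 - α`; then
`n₁ = m - k` and `n₃ = n + k`. Since `β < 1`, one has `⟨m⟩ ≲ ⟨m - k⟩`, so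
`⟨k⟩^p ≲ ⟨m⟩^{βp} ≤ ⟨m⟩^{2s} ≲ ⟨m - k⟩^s ⟨m⟩^s` for `p = 2s + α`. Cauchy–Schwarz in `m` therefore
bounds the sum over `m` by `⟨k⟩^{-p}` times two norms. As `p > 1` and `2s ≤ p`, correlating
with `⟨k⟩^{-p}` is bounded on `ℓ²_s`: this is Cauchy–Schwarz in `k` together with
`⟨n⟩^{2s} ⟨k⟩^{-p} ⟨n + k⟩^{-2s} ≲ ⟨k⟩^{-p} + ⟨n + k⟩^{-p}`.
-/

section Bracket

theorem one_le_jbZ (n : ℤ) : 1 ≤ jbZ n :=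
  Real.one_le_sqrt.2 (le_add_of_nonneg_right (sq_nonneg _))

theorem jbZ_pos (n : ℤ) : 0 < jbZ n :=
  one_pos.trans_le (one_le_jbZ n)

theorem abs_le_jbZ (n : ℤ) : |(n : ℝ)| ≤ jbZ n :=
  Real.abs_le_sqrt (le_add_of_nonneg_left zero_le_one)

theorem jbZ_le_one_add_abs (n : ℤ) : jbZ n ≤ 1 + |(n : ℝ)| := by
  simpa [jbZ] using sqrt_one_add_norm_sq_le (n : ℝ)

theorem jbZ_sq (n : ℤ) : jbZ n ^ 2 = 1 + (n : ℝ) ^ 2 :=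
  Real.sq_sqrt (by positivity)

theorem jbZ_sub_le (m k : ℤ) : jbZ (m - k) ≤ jbZ m + jbZ k := by
  have hmk : |(m : ℝ)| * |(k : ℝ)| ≤ jbZ m * jbZ k :=
    mul_le_mul (abs_le_jbZ m) (abs_le_jbZ k) (abs_nonneg _) (jbZ_pos m).le
  refine Real.sqrt_le_iff.2 ⟨(add_pos (jbZ_pos m) (jbZ_pos k)).le, ?_⟩
  rw [← abs_mul] at hmk
  push_cast
  linarith [neg_abs_le ((m : ℝ) * k), jbZ_sq m, jbZ_sq k, sub_sq (m : ℝ) k,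
    add_sq (jbZ m) (jbZ k)]

theorem jbZ_le_two_mul_rpow {β : ℝ} (hβ : 0 ≤ β) {k m : ℤ} (hkm : |(k : ℝ)| ≤ |(m : ℝ)| ^ β) :
    jbZ k ≤ 2 * jbZ m ^ β := by
  have hm : |(m : ℝ)| ^ β ≤ jbZ m ^ β := Real.rpow_le_rpow (abs_nonneg _) (abs_le_jbZ m) hβ
  linarith [jbZ_le_one_add_abs k, Real.one_le_rpow (one_le_jbZ m) hβ]

theorem jbZ_le_mul_jbZ_sub {β : ℝ} (hβ : 0 ≤ β) (hβ' : β < 1) {k m : ℤ}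
    (hkm : |(k : ℝ)| ≤ |(m : ℝ)| ^ β) : jbZ m ≤ (2 + (1 - β)⁻¹) * jbZ (m - k) := by
  have h1β : 0 < 1 - β := sub_pos.2 hβ'
  have young : |(m : ℝ)| ^ β ≤ β * |(m : ℝ)| + (1 - β) := by
    simpa using Real.geom_mean_le_arith_mean2_weighted hβ h1β.le (abs_nonneg (m : ℝ))
      zero_le_one (add_sub_cancel β 1)
  have habs : |(m : ℝ)| ≤ 1 + (1 - β)⁻¹ * |((m - k : ℤ) : ℝ)| := by
    have := abs_sub_abs_le_abs_sub (m : ℝ) k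
    rw [← sub_le_iff_le_add', le_inv_mul_iff₀ h1β]
    push_cast
    linarith
  calc jbZ m ≤ 2 * 1 + (1 - β)⁻¹ * |((m - k : ℤ) : ℝ)| := by linarith [jbZ_le_one_add_abs m]
    _ ≤ 2 * jbZ (m - k) + (1 - β)⁻¹ * jbZ (m - k) := by
        gcongr
        exacts [one_le_jbZ _, abs_le_jbZ _]
    _ = (2 + (1 - β)⁻¹) * jbZ (m - k) := by ring

theorem summable_jbZ_rpow_neg {p : ℝ} (hp : 1 < p) : Summable fun n : ℤ => jbZ n ^ (-p) := by
  refine (Real.summable_abs_int_rpow hp).of_norm_bounded_eventually ?_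
  filter_upwards [(Set.finite_singleton (0 : ℤ)).compl_mem_cofinite] with n hn
  rw [Real.norm_of_nonneg (Real.rpow_nonneg (jbZ_pos n).le _)]
  exact Real.rpow_le_rpow_of_nonpos (abs_pos.2 (Int.cast_ne_zero.2 hn)) (abs_le_jbZ n)
    (by linarith)

end Bracket

/-- The weight `⟨n⟩^r`, valued in `[0,∞]` so that it can be used in unconditional sums. -/
noncomputable def jbWeight (r : ℝ) (n : ℤ) : ℝ≥0∞ := ENNReal.ofReal (jbZ n ^ r)

section Weight

theorem jbWeight_mul_jbWeight (r t : ℝ) (n : ℤ) :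
    jbWeight r n * jbWeight t n = jbWeight (r + t) n := by
  rw [jbWeight, jbWeight, jbWeight, Real.rpow_add (jbZ_pos n),
    ENNReal.ofReal_mul (Real.rpow_nonneg (jbZ_pos n).le r)]

theorem jbWeight_sq (r : ℝ) (n : ℤ) : jbWeight r n ^ 2 = jbWeight (2 * r) n := by
  rw [sq, jbWeight_mul_jbWeight, two_mul]

theorem jbWeight_neg_mul_self (r : ℝ) (n : ℤ) : jbWeight (-r) n * jbWeight r n = 1 := by
  rw [jbWeight_mul_jbWeight, neg_add_cancel]
  simp [jbWeight]

theorem jbWeight_le_of_exponent_le {r t : ℝ} (hrt : r ≤ t) (n : ℤ) :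
    jbWeight r n ≤ jbWeight t n :=
  ENNReal.ofReal_le_ofReal (Real.rpow_le_rpow_of_exponent_le (one_le_jbZ n) hrt)

theorem jbWeight_le_of_nonpos {r : ℝ} (hr : r ≤ 0) {m n : ℤ} (hmn : jbZ m ≤ jbZ n) :
    jbWeight r n ≤ jbWeight r m :=
  ENNReal.ofReal_le_ofReal (Real.rpow_le_rpow_of_nonpos (jbZ_pos m) hmn hr)

theorem jbWeight_le_mul_of_jbZ_le_mul_rpow {r c β : ℝ} (hr : 0 ≤ r) (hc : 0 ≤ c) {m n : ℤ}
    (hmn : jbZ m ≤ c * jbZ n ^ β) :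
    jbWeight r m ≤ ENNReal.ofReal (c ^ r) * jbWeight (β * r) n := by
  rw [jbWeight, jbWeight, ← ENNReal.ofReal_mul (by positivity), Real.rpow_mul (jbZ_pos n).le,
    ← Real.mul_rpow hc (Real.rpow_nonneg (jbZ_pos n).le β)]
  exact ENNReal.ofReal_le_ofReal (Real.rpow_le_rpow (jbZ_pos m).le hmn hr)

theorem jbWeight_le_mul_of_jbZ_le_mul {r c : ℝ} (hr : 0 ≤ r) (hc : 0 ≤ c) {m n : ℤ}
    (hmn : jbZ m ≤ c * jbZ n) : jbWeight r m ≤ ENNReal.ofReal (c ^ r) * jbWeight r n := by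
  simpa using jbWeight_le_mul_of_jbZ_le_mul_rpow (β := 1) hr hc (by simpa using hmn)

theorem tsum_jbWeight_neg_ne_top {p : ℝ} (hp : 1 < p) : ∑' n, jbWeight (-p) n ≠ ∞ :=
  (summable_jbZ_rpow_neg hp).tsum_ofReal_ne_top

theorem jbWeight_mul_neg_mul_neg_le {a p : ℝ} (ha : 0 ≤ a) (hap : a ≤ p) (n k : ℤ) :
    jbWeight a n * (jbWeight (-p) k * jbWeight (-a) (n + k)) ≤
      ENNReal.ofReal (2 ^ a) * (jbWeight (-p) k + jbWeight (-p) (n + k)) := by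
  have htri : jbZ n ≤ jbZ (n + k) + jbZ k := by simpa using jbZ_sub_le (n + k) k
  rcases le_total (jbZ k) (jbZ (n + k)) with hk | hk
  · have hn := jbWeight_le_mul_of_jbZ_le_mul ha zero_le_two
      (show jbZ n ≤ 2 * jbZ (n + k) by linarith)
    calc jbWeight a n * (jbWeight (-p) k * jbWeight (-a) (n + k))
        ≤ ENNReal.ofReal (2 ^ a) * jbWeight a (n + k) *
          (jbWeight (-p) k * jbWeight (-a) (n + k)) := by gcongr
      _ = ENNReal.ofReal (2 ^ a) *
          (jbWeight (-p) k * (jbWeight (-a) (n + k) * jbWeight a (n + k))) := by ring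
      _ ≤ ENNReal.ofReal (2 ^ a) * (jbWeight (-p) k + jbWeight (-p) (n + k)) := by
          rw [jbWeight_neg_mul_self, mul_one]
          gcongr
          exact le_self_add
  · have hn := jbWeight_le_mul_of_jbZ_le_mul ha zero_le_two
      (show jbZ n ≤ 2 * jbZ k by linarith)
    calc jbWeight a n * (jbWeight (-p) k * jbWeight (-a) (n + k))
        ≤ ENNReal.ofReal (2 ^ a) * jbWeight a k *
          (jbWeight (-p) k * jbWeight (-a) (n + k)) := by gcongr
      _ = ENNReal.ofReal (2 ^ a) * (jbWeight (a + -p) k * jbWeight (-a) (n + k)) := by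
          rw [← jbWeight_mul_jbWeight]; ring
      _ ≤ ENNReal.ofReal (2 ^ a) * (jbWeight (a + -p) (n + k) * jbWeight (-a) (n + k)) := by
          gcongr
          exact jbWeight_le_of_nonpos (by linarith) hk
      _ ≤ ENNReal.ofReal (2 ^ a) * (jbWeight (-p) k + jbWeight (-p) (n + k)) := by
          rw [jbWeight_mul_jbWeight, add_neg_cancel_comm]
          gcongr
          exact le_add_self

theorem jbWeight_mul_tsum_neg_mul_neg_le {a p : ℝ} (ha : 0 ≤ a) (hap : a ≤ p) (n : ℤ) :
    jbWeight a n * ∑' k, jbWeight (-p) k * jbWeight (-a) (n + k) ≤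
      ENNReal.ofReal (2 ^ a) * (2 * ∑' k, jbWeight (-p) k) := by
  have hshift : ∑' k, jbWeight (-p) (n + k) = ∑' k, jbWeight (-p) k :=
    (Equiv.addLeft n).tsum_eq _
  calc jbWeight a n * ∑' k, jbWeight (-p) k * jbWeight (-a) (n + k)
      ≤ ∑' k, ENNReal.ofReal (2 ^ a) * (jbWeight (-p) k + jbWeight (-p) (n + k)) := by
        rw [← ENNReal.tsum_mul_left]
        exact ENNReal.tsum_le_tsum (jbWeight_mul_neg_mul_neg_le ha hap n)
    _ = ENNReal.ofReal (2 ^ a) * (2 * ∑' k, jbWeight (-p) k) := by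
        rw [ENNReal.tsum_mul_left, ENNReal.tsum_add, hshift, two_mul]

theorem jbWeight_le_mul_jbWeight_sub {β s p : ℝ} (hβ : 0 ≤ β) (hβ' : β < 1) (hs : 0 ≤ s)
    (hp : 0 ≤ p) (hβp : β * p ≤ 2 * s) {k m : ℤ} (hkm : |(k : ℝ)| ≤ |(m : ℝ)| ^ β) :
    jbWeight p k ≤ ENNReal.ofReal (2 ^ p) * ENNReal.ofReal ((2 + (1 - β)⁻¹) ^ s) *
      (jbWeight s (m - k) * jbWeight s m) := by
  have hC : 0 ≤ 2 + (1 - β)⁻¹ := add_nonneg zero_le_two (inv_nonneg.2 (sub_pos.2 hβ').le)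
  calc jbWeight p k ≤ ENNReal.ofReal (2 ^ p) * jbWeight (β * p) m :=
        jbWeight_le_mul_of_jbZ_le_mul_rpow hp zero_le_two (jbZ_le_two_mul_rpow hβ hkm)
    _ ≤ ENNReal.ofReal (2 ^ p) * (jbWeight s m * jbWeight s m) := by
        rw [jbWeight_mul_jbWeight, ← two_mul]
        gcongr
        exact jbWeight_le_of_exponent_le hβp m
    _ ≤ ENNReal.ofReal (2 ^ p) *
        (ENNReal.ofReal ((2 + (1 - β)⁻¹) ^ s) * jbWeight s (m - k) * jbWeight s m) := by
        gcongr
        exact jbWeight_le_mul_of_jbZ_le_mul hs hC (jbZ_le_mul_jbZ_sub hβ hβ' hkm)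
    _ = _ := by ring

end Weight

section Tsum

variable {ι : Type*}

theorem ennreal_tsum_sq_le_tsum_mul_tsum_of_sq_le_mul {r f g : ι → ℝ≥0∞}
    (h : ∀ i, r i ^ 2 ≤ f i * g i) : (∑' i, r i) ^ 2 ≤ (∑' i, f i) * ∑' i, g i := by
  have sqrt_sq (x : ℝ≥0∞) : (x ^ (1 / 2 : ℝ)) ^ (2 : ℝ) = x := by
    rw [← ENNReal.rpow_mul]; norm_num
  have hr (i : ι) : r i ≤ f i ^ (1 / 2 : ℝ) * g i ^ (1 / 2 : ℝ) := by
    rw [← ENNReal.mul_rpow_of_nonneg _ _ (by norm_num), one_div,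
      ENNReal.le_rpow_inv_iff two_pos, ENNReal.rpow_two]
    exact h i
  have hsum : ∑' i, r i ≤ (∑' i, f i) ^ (1 / 2 : ℝ) * (∑' i, g i) ^ (1 / 2 : ℝ) := by
    rw [ENNReal.tsum_eq_iSup_sum]
    refine iSup_le fun t => (Finset.sum_le_sum fun i _ => hr i).trans ?_
    refine (ENNReal.inner_le_Lp_mul_Lq t _ _ Real.HolderConjugate.two_two).trans ?_
    simp only [sqrt_sq]
    gcongr <;> exact ENNReal.sum_le_tsum t
  calc (∑' i, r i) ^ 2
      ≤ ((∑' i, f i) ^ (1 / 2 : ℝ) * (∑' i, g i) ^ (1 / 2 : ℝ)) ^ (2 : ℝ) := by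
        rw [ENNReal.rpow_two]; gcongr
    _ = (∑' i, f i) * ∑' i, g i := by
        rw [ENNReal.mul_rpow_of_nonneg _ _ zero_le_two, sqrt_sq, sqrt_sq]

theorem ennreal_Lp_add_le_tsum (f g : ι → ℝ≥0∞) {p : ℝ} (hp : 1 ≤ p) :
    (∑' i, (f i + g i) ^ p) ^ (1 / p) ≤
      (∑' i, f i ^ p) ^ (1 / p) + (∑' i, g i ^ p) ^ (1 / p) := by
  have hp₀ : 0 < p := one_pos.trans_le hp
  rw [one_div, ENNReal.rpow_inv_le_iff hp₀, ENNReal.tsum_eq_iSup_sum]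
  refine iSup_le fun t => (ENNReal.rpow_inv_le_iff hp₀).1 ?_
  rw [← one_div]
  refine (ENNReal.Lp_add_le t f g hp).trans ?_
  gcongr <;> exact ENNReal.sum_le_tsum t

end Tsum

/-- The weighted `ℓ²_s(ℤ)` norm of a `[0,∞]`-valued sequence; it extends `l2sZ` to sequences
that are themselves given by infinite sums. -/
noncomputable def l2sENorm (s : ℝ) (f : ℤ → ℝ≥0∞) : ℝ≥0∞ :=
  (∑' n, jbWeight (2 * s) n * f n ^ 2) ^ (1 / 2 : ℝ)

section Norm

theorem l2sENorm_coe (s : ℝ) (ω : ℤ → ℝ≥0) : l2sENorm s (fun n => ω n) = l2sZ s ω :=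
  rfl

theorem l2sENorm_sq (s : ℝ) (f : ℤ → ℝ≥0∞) :
    l2sENorm s f ^ 2 = ∑' n, jbWeight (2 * s) n * f n ^ 2 := by
  rw [l2sENorm, ← ENNReal.rpow_two, ← ENNReal.rpow_mul]
  norm_num

theorem l2sENorm_mono {s : ℝ} {f g : ℤ → ℝ≥0∞} (hfg : ∀ n, f n ≤ g n) :
    l2sENorm s f ≤ l2sENorm s g := by
  unfold l2sENorm
  gcongr with n
  exact hfg n

theorem l2sENorm_add_le (s : ℝ) (f g : ℤ → ℝ≥0∞) :
    l2sENorm s (fun n => f n + g n) ≤ l2sENorm s f + l2sENorm s g := by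
  simpa only [l2sENorm, ← mul_add, ENNReal.rpow_two, mul_pow, jbWeight_sq] using
    ennreal_Lp_add_le_tsum (fun n => jbWeight s n * f n) (fun n => jbWeight s n * g n) one_le_two

theorem l2sENorm_const_mul (s : ℝ) (c : ℝ≥0∞) (f : ℤ → ℝ≥0∞) :
    l2sENorm s (fun n => c * f n) = c * l2sENorm s f := by
  refine ENNReal.pow_right_strictMono two_ne_zero |>.injective ?_
  simp only [mul_pow, l2sENorm_sq, mul_left_comm _ (c ^ 2), ENNReal.tsum_mul_left]

end Norm

/-- The correlation `n ↦ ∑_k a_k f_{n+k}` of two nonnegative sequences. -/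
noncomputable def crossCorr (a f : ℤ → ℝ≥0∞) (n : ℤ) : ℝ≥0∞ := ∑' k, a k * f (n + k)

section Correlation

theorem tsum_crossCorr (a f : ℤ → ℝ≥0∞) :
    ∑' n, crossCorr a f n = (∑' k, a k) * ∑' n, f n := by
  have hshift (k : ℤ) : ∑' n, f (n + k) = ∑' n, f n := (Equiv.addRight k).tsum_eq f
  simp only [crossCorr, ENNReal.tsum_comm (α := ℤ), ENNReal.tsum_mul_left, hshift,
    ENNReal.tsum_mul_right]

theorem crossCorr_le_const_mul {a b : ℤ → ℝ≥0∞} {c : ℝ≥0∞} (hab : ∀ k, a k ≤ c * b k)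
    (f : ℤ → ℝ≥0∞) (n : ℤ) : crossCorr a f n ≤ c * crossCorr b f n := by
  simp only [crossCorr, ← ENNReal.tsum_mul_left, ← mul_assoc]
  gcongr with k
  exact hab k

theorem l2sENorm_crossCorr_jbWeight_le {s p : ℝ} (hs : 0 ≤ s) (hsp : 2 * s ≤ p)
    (f : ℤ → ℝ≥0∞) :
    l2sENorm s (crossCorr (jbWeight (-p)) f) ≤
      ENNReal.ofReal (2 ^ s) * 2 * (∑' k, jbWeight (-p) k) * l2sENorm s f := by
  set Z := ∑' k, jbWeight (-p) k
  set F : ℤ → ℝ≥0∞ := fun m => jbWeight (2 * s) m * f m ^ 2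
  have cauchy_schwarz (n : ℤ) : crossCorr (jbWeight (-p)) f n ^ 2 ≤
      (∑' k, jbWeight (-p) k * jbWeight (-(2 * s)) (n + k)) * crossCorr (jbWeight (-p)) F n := by
    refine ennreal_tsum_sq_le_tsum_mul_tsum_of_sq_le_mul fun k => le_of_eq ?_
    calc (jbWeight (-p) k * f (n + k)) ^ 2
        = jbWeight (-p) k ^ 2 * f (n + k) ^ 2 *
          (jbWeight (-(2 * s)) (n + k) * jbWeight (2 * s) (n + k)) := by
          rw [jbWeight_neg_mul_self, mul_one, mul_pow]
      _ = jbWeight (-p) k * jbWeight (-(2 * s)) (n + k) * (jbWeight (-p) k * F (n + k)) := by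
          ring
  have pointwise (n : ℤ) : jbWeight (2 * s) n * crossCorr (jbWeight (-p)) f n ^ 2 ≤
      ENNReal.ofReal (2 ^ (2 * s)) * (2 * Z) * crossCorr (jbWeight (-p)) F n := by
    grw [cauchy_schwarz n, ← mul_assoc, jbWeight_mul_tsum_neg_mul_neg_le (by positivity) hsp n]
  have two_rpow : ENNReal.ofReal (2 ^ (2 * s)) = ENNReal.ofReal (2 ^ s) ^ 2 := by
    rw [← ENNReal.ofReal_pow (by positivity), ← Real.rpow_mul_natCast zero_le_two, mul_comm s,
      Nat.cast_two]
  rw [← ENNReal.pow_le_pow_left_iff two_ne_zero]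
  calc l2sENorm s (crossCorr (jbWeight (-p)) f) ^ 2
      ≤ ∑' n, ENNReal.ofReal (2 ^ (2 * s)) * (2 * Z) * crossCorr (jbWeight (-p)) F n := by
        rw [l2sENorm_sq]
        exact ENNReal.tsum_le_tsum pointwise
    _ = ENNReal.ofReal (2 ^ s) ^ 2 * 2 * Z ^ 2 * l2sENorm s f ^ 2 := by
        rw [ENNReal.tsum_mul_left, tsum_crossCorr, two_rpow, l2sENorm_sq]
        ring
    _ ≤ ENNReal.ofReal (2 ^ s) ^ 2 * 2 ^ 2 * Z ^ 2 * l2sENorm s f ^ 2 := by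
        gcongr
        norm_num
    _ = (ENNReal.ofReal (2 ^ s) * 2 * Z * l2sENorm s f) ^ 2 := by ring

end Correlation

/-- The inner sum `∑ f_{m-k} g_m` over the `m` with `|k| ≤ |m|^β`. With `k = n₂ - n₁` and
`m = n₂` it collects the pairs of frequencies `n₁ = m - k`, `n₂ = m` that are close to each
other. -/
noncomputable def nearSum (β : ℝ) (f g : ℤ → ℝ≥0∞) (k : ℤ) : ℝ≥0∞ :=
  ∑' m : {m : ℤ // |(k : ℝ)| ≤ |(m : ℝ)| ^ β}, f (m - k) * g m

/-- The triples `(n₁, n₂, n₃)` with `n₁ - n₂ + n₃ = n` and `n₁` close to `n₂`; for `β = 1 - α`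
they form the part of `Γ_n^R` where the first of the two conditions of `Γ_n^N` fails. -/
def nearTriples (β : ℝ) (n : ℤ) : Set (ℤ × ℤ × ℤ) :=
  {q | q.1 - q.2.1 + q.2.2 = n ∧ |(q.2.1 : ℝ) - q.1| ≤ |(q.2.1 : ℝ)| ^ β}

section NearSum

theorem jbWeight_mul_nearSum_le {β s p : ℝ} (hβ : 0 ≤ β) (hβ' : β < 1) (hs : 0 ≤ s)
    (hp : 0 ≤ p) (hβp : β * p ≤ 2 * s) (f g : ℤ → ℝ≥0∞) (k : ℤ) :
    jbWeight p k * nearSum β f g k ≤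
      ENNReal.ofReal (2 ^ p) * ENNReal.ofReal ((2 + (1 - β)⁻¹) ^ s) *
        (l2sENorm s f * l2sENorm s g) := by
  set C := ENNReal.ofReal (2 ^ p) * ENNReal.ofReal ((2 + (1 - β)⁻¹) ^ s)
  have hshift : ∑' m, jbWeight (2 * s) (m - k) * f (m - k) ^ 2 = l2sENorm s f ^ 2 := by
    rw [l2sENorm_sq]
    exact (Equiv.subRight k).tsum_eq fun m => jbWeight (2 * s) m * f m ^ 2
  have cauchy_schwarz : ∑' m, jbWeight s (m - k) * f (m - k) * (jbWeight s m * g m) ≤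
      l2sENorm s f * l2sENorm s g := by
    rw [← ENNReal.pow_le_pow_left_iff two_ne_zero, mul_pow, ← hshift, l2sENorm_sq s g]
    exact ennreal_tsum_sq_le_tsum_mul_tsum_of_sq_le_mul fun m => by
      simp only [mul_pow, jbWeight_sq, le_refl]
  calc jbWeight p k * nearSum β f g k
      = ∑' m : {m : ℤ // |(k : ℝ)| ≤ |(m : ℝ)| ^ β}, jbWeight p k * (f (m - k) * g m) :=
        ENNReal.tsum_mul_left.symm
    _ ≤ ∑' m : {m : ℤ // |(k : ℝ)| ≤ |(m : ℝ)| ^ β},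
          C * (jbWeight s (m - k) * f (m - k) * (jbWeight s m * g m)) := by
        refine ENNReal.tsum_le_tsum fun m => ?_
        grw [jbWeight_le_mul_jbWeight_sub hβ hβ' hs hp hβp m.2]
        exact le_of_eq (by ring)
    _ ≤ ∑' m, C * (jbWeight s (m - k) * f (m - k) * (jbWeight s m * g m)) :=
        ENNReal.tsum_comp_le_tsum_of_injective Subtype.val_injective _
    _ ≤ C * (l2sENorm s f * l2sENorm s g) := by
        rw [ENNReal.tsum_mul_left]
        gcongr

theorem exists_l2sENorm_crossCorr_nearSum_le {β s : ℝ} (hβ : 0 ≤ β) (hβ' : β < 1)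
    (hs : β < 2 * s) :
    ∃ C : ℝ≥0, ∀ f g h : ℤ → ℝ≥0∞, l2sENorm s (crossCorr (nearSum β f g) h) ≤
      C * (l2sENorm s f * l2sENorm s g * l2sENorm s h) := by
  have hs₀ : 0 ≤ s := by linarith
  obtain ⟨p, hp, hsp, hβp⟩ : ∃ p, 1 < p ∧ 2 * s ≤ p ∧ β * p ≤ 2 * s :=
    ⟨2 * s + (1 - β), by linarith, by linarith,
      by linarith [mul_nonneg (sub_pos.2 hβ').le (sub_pos.2 hs).le]⟩
  set A := ENNReal.ofReal (2 ^ p) * ENNReal.ofReal ((2 + (1 - β)⁻¹) ^ s)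
  set B := ENNReal.ofReal (2 ^ s) * 2 * ∑' k, jbWeight (-p) k
  have hAB : A * B ≠ ∞ := by
    have := tsum_jbWeight_neg_ne_top hp
    finiteness
  refine ⟨(A * B).toNNReal, fun f g h => ?_⟩
  have hnear (k : ℤ) :
      nearSum β f g k ≤ A * (l2sENorm s f * l2sENorm s g) * jbWeight (-p) k := by
    calc nearSum β f g k = jbWeight (-p) k * (jbWeight p k * nearSum β f g k) := by
          rw [← mul_assoc, jbWeight_neg_mul_self, one_mul]
      _ ≤ jbWeight (-p) k * (A * (l2sENorm s f * l2sENorm s g)) := by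
          exact mul_le_mul_right
            (jbWeight_mul_nearSum_le hβ hβ' hs₀ (by linarith) hβp f g k) _
      _ = A * (l2sENorm s f * l2sENorm s g) * jbWeight (-p) k := mul_comm _ _
  calc l2sENorm s (crossCorr (nearSum β f g) h)
      ≤ A * (l2sENorm s f * l2sENorm s g) * l2sENorm s (crossCorr (jbWeight (-p)) h) := by
        rw [← l2sENorm_const_mul]
        exact l2sENorm_mono (crossCorr_le_const_mul hnear h)
    _ ≤ A * (l2sENorm s f * l2sENorm s g) * (B * l2sENorm s h) := by
        gcongr
        exact l2sENorm_crossCorr_jbWeight_le hs₀ hsp h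
    _ = (A * B).toNNReal * (l2sENorm s f * l2sENorm s g * l2sENorm s h) := by
        rw [ENNReal.coe_toNNReal hAB]
        ring

/-- The change of variables `k = n₂ - n₁`, `m = n₂` on `nearTriples`. -/
def nearTriplesEquiv (β : ℝ) (n : ℤ) :
    nearTriples β n ≃ Σ k : ℤ, {m : ℤ // |(k : ℝ)| ≤ |(m : ℝ)| ^ β} where
  toFun q := ⟨q.1.2.1 - q.1.1, q.1.2.1, by simpa using q.2.2⟩
  invFun q := ⟨(q.2 - q.1, q.2, n + q.1), by simp, by simpa using q.2.2⟩
  left_inv := by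
    rintro ⟨⟨n₁, n₂, n₃⟩, hn, -⟩
    have hn₃ : n + (n₂ - n₁) = n₃ := by
      simp only at hn
      omega
    exact Subtype.ext (Prod.ext (sub_sub_cancel n₂ n₁) (Prod.ext rfl hn₃))
  right_inv := by
    rintro ⟨k, m, -⟩
    exact Sigma.subtype_ext (sub_sub_cancel m k) rfl

theorem tsum_nearTriples (β : ℝ) (f g h : ℤ → ℝ≥0∞) (n : ℤ) :
    ∑' q : nearTriples β n, f q.1.1 * g q.1.2.1 * h q.1.2.2 =
      crossCorr (nearSum β f g) h n := by
  rw [← (nearTriplesEquiv β n).symm.tsum_eq, ENNReal.tsum_sigma']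
  simp only [crossCorr, nearSum, ← ENNReal.tsum_mul_right]
  rfl

theorem tsum_GammaR_le (α : ℝ) (f g h : ℤ → ℝ≥0∞) (n : ℤ) :
    ∑' q : {q : ℤ × ℤ × ℤ // GammaR α n q.1 q.2.1 q.2.2}, f q.1.1 * g q.1.2.1 * h q.1.2.2 ≤
      crossCorr (nearSum (1 - α) f g) h n + crossCorr (nearSum (1 - α) h g) f n := by
  let reverse : ℤ × ℤ × ℤ → ℤ × ℤ × ℤ := fun q => (q.2.2, q.2.1, q.1)
  have reverse_invol : Function.Involutive reverse := fun _ => rfl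
  have hcover : {q : ℤ × ℤ × ℤ | GammaR α n q.1 q.2.1 q.2.2} ⊆
      nearTriples (1 - α) n ∪ reverse ⁻¹' nearTriples (1 - α) n := by
    rintro ⟨n₁, n₂, n₃⟩ ⟨hn, hnear⟩
    rcases not_and_or.1 hnear with h₁ | h₃
    · exact .inl ⟨hn, not_lt.1 h₁⟩
    · have hn' : n₃ - n₂ + n₁ = n := by
        simp only at hn
        omega
      exact .inr ⟨hn', not_lt.1 h₃⟩
  let F : ℤ × ℤ × ℤ → ℝ≥0∞ := fun q => f q.1 * g q.2.1 * h q.2.2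
  have hreverse : ∑' q : reverse ⁻¹' nearTriples (1 - α) n, F q =
      ∑' q : nearTriples (1 - α) n, h q.1.1 * g q.1.2.1 * f q.1.2.2 := by
    rw [← ((reverse_invol.toPerm reverse).subtypeEquiv fun _ => Iff.rfl).tsum_eq]
    refine tsum_congr fun q => ?_
    change f q.1.2.2 * g q.1.2.1 * h q.1.1 = h q.1.1 * g q.1.2.1 * f q.1.2.2
    ring
  rw [← tsum_nearTriples, ← tsum_nearTriples, ← hreverse]
  exact (ENNReal.tsum_mono_subtype F hcover).trans (ENNReal.tsum_union_le F _ _)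

end NearSum

theorem fractional_NLS_remainder_general (α : ℝ) (hα : 0 < α) (hα' : α ≤ 1)
    (s : ℝ) (hs : (1 - α) / 2 < s) :
    ∃ C : ℝ, 0 < C ∧
      ∀ (ω₁ ω₂ ω₃ : ℤ → ℝ≥0),
        (∑' n : ℤ, ENNReal.ofReal (jbZ n ^ (2 * s)) *
            (∑' p : {q : ℤ × ℤ × ℤ // GammaR α n q.1 q.2.1 q.2.2},
              ((ω₁ p.1.1 : ℝ≥0∞) * (ω₂ p.1.2.1 : ℝ≥0∞) * (ω₃ p.1.2.2 : ℝ≥0∞))) ^ 2) ^ (1/2 : ℝ)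
          ≤ ENNReal.ofReal C * (l2sZ s ω₁ * l2sZ s ω₂ * l2sZ s ω₃) := by
  obtain ⟨C, hC⟩ := exists_l2sENorm_crossCorr_nearSum_le (β := 1 - α) (s := s)
    (by linarith) (by linarith) (by linarith)
  refine ⟨2 * C + 1, by positivity, fun ω₁ ω₂ ω₃ => ?_⟩
  simp only [← l2sENorm_coe]
  set N := l2sENorm s (fun n => ω₁ n) * l2sENorm s (fun n => ω₂ n) * l2sENorm s (fun n => ω₃ n)
  calc _ ≤ l2sENorm s (fun n =>
          crossCorr (nearSum (1 - α) (fun n => ω₁ n) (fun n => ω₂ n)) (fun n => ω₃ n) n +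
          crossCorr (nearSum (1 - α) (fun n => ω₃ n) (fun n => ω₂ n)) (fun n => ω₁ n) n) :=
        l2sENorm_mono (tsum_GammaR_le α (fun n => ω₁ n) (fun n => ω₂ n) (fun n => ω₃ n))
    _ ≤ C * N + C * N := by
        refine (l2sENorm_add_le s _ _).trans (add_le_add (hC _ _ _) ((hC _ _ _).trans_eq ?_))
        ring
    _ = ENNReal.ofReal (2 * C) * N := by
        rw [ENNReal.ofReal_mul zero_le_two, ENNReal.ofReal_coe_nnreal, ENNReal.ofReal_ofNat]
        ring
    _ ≤ ENNReal.ofReal (2 * C + 1) * N := by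
        gcongr
        linarith

/-- The remainder estimate for the cubic fractional NLS: for `1/2 < α < 1`
and `s > (1-α)/2`, the `ℓ²_s` norm of the trilinear form restricted to `Γ_n^R` is bounded
by `C ∏_j ‖ω⁽ʲ⁾‖_{ℓ²_s}`. -/
theorem fractional_NLS_remainder (α : ℝ) (hα : 1/2 < α) (hα' : α < 1)
    (s : ℝ) (hs : (1 - α) / 2 < s) :
    ∃ C : ℝ, 0 < C ∧
      ∀ (ω₁ ω₂ ω₃ : ℤ → ℝ≥0),
        (∑' n : ℤ, ENNReal.ofReal (jbZ n ^ (2 * s)) *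
            (∑' p : {q : ℤ × ℤ × ℤ // GammaR α n q.1 q.2.1 q.2.2},
              ((ω₁ p.1.1 : ℝ≥0∞) * (ω₂ p.1.2.1 : ℝ≥0∞) * (ω₃ p.1.2.2 : ℝ≥0∞))) ^ 2) ^ (1/2 : ℝ)
          ≤ ENNReal.ofReal C * (l2sZ s ω₁ * l2sZ s ω₂ * l2sZ s ω₃) := by
  exact fractional_NLS_remainder_general α (by linarith) hα'.le s hs
end

section
/- There exists C > 0 such that for each sign σ ∈ {+1,−1} and all nonnegative square-summable sequences f, g, h : ℤ → [0,∞): Σ_{n₁, n₂ ∈ ℤ} ( ⟨n₁⟩^{1/2} / ( ⟨Φ_σ⟩^{1/2} ⟨n₂⟩^{1/2} ) ) f_{n₁−n₂} g_{n₁} h_{n₂} ≤ C ‖f‖_{ℓ²} ‖g‖_{ℓ²} ‖h‖_{ℓ²}. -/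
open scoped ENNReal NNReal

/-- `⟨x⟩ = (1+x²)^{1/2}`. -/
noncomputable def jbR (x : ℝ) : ℝ := Real.sqrt (1 + x ^ 2)

/-- The Zakharov phase `Φ_σ = n₁² - n₂² + σ⟨n₀⟩` with `n₀ = n₁ - n₂`. -/
noncomputable def PhiZak (σ : ℝ) (n₁ n₂ : ℤ) : ℝ :=
  ((n₁ ^ 2 - n₂ ^ 2 : ℤ) : ℝ) + σ * jbR ((n₁ - n₂ : ℤ) : ℝ)

/-- The `ℓ²(ℤ)` norm (valued in `[0,∞]`). -/
noncomputable def l2Z (ω : ℤ → ℝ≥0) : ℝ≥0∞ :=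
  (∑' n : ℤ, ((ω n : ℝ≥0∞)) ^ 2) ^ (1/2 : ℝ)

/-!
Write `d = n₁ - n₂` and `s = n₁ + n₂`, so that `Φ_σ = d s + σ⟨d⟩`. Unless `⟨d⟩ ≲ 1` or `⟨s⟩ ≲ 1`,
the product `d s` dominates the wave term, `⟨Φ_σ⟩ ≳ ⟨d⟩⟨s⟩`, and `⟨n₁⟩ ≤ ⟨d⟩ + ⟨s⟩` gives
`⟨n₁⟩ / (⟨Φ_σ⟩⟨n₂⟩) ≲ 1 / (⟨s⟩⟨n₂⟩) + 1 / (⟨d⟩⟨n₂⟩)`. In the two exceptional regions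
`⟨n₁⟩ ≲ ⟨n₂⟩`, while `⟨d⟩⁻² ≳ 1` or `⟨s⟩⁻² ≳ 1`. In all cases the squared weight is
`≲ ⟨n₂⟩⁻² + ⟨d⟩⁻² + ⟨s⟩⁻²`, whose sum over `n₂` is bounded uniformly in `n₁`. Cauchy–Schwarz,
pairing the weight times `g` with `f` times `h`, concludes.
-/

lemma jbR_sq (x : ℝ) : jbR x ^ 2 = 1 + x ^ 2 := Real.sq_sqrt (by positivity)

lemma one_le_jbR (x : ℝ) : 1 ≤ jbR x :=
  Real.one_le_sqrt.mpr (le_add_of_nonneg_right (sq_nonneg x))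

lemma jbR_pos (x : ℝ) : 0 < jbR x := one_pos.trans_le (one_le_jbR x)

lemma jbR_neg (x : ℝ) : jbR (-x) = jbR x := by simp only [jbR, neg_sq]

lemma abs_le_jbR (x : ℝ) : |x| ≤ jbR x := Real.abs_le_sqrt (le_add_of_nonneg_left zero_le_one)

lemma jbR_le_one_add_abs (x : ℝ) : jbR x ≤ 1 + |x| := by
  simpa only [jbR, Real.norm_eq_abs, sq_abs] using sqrt_one_add_norm_sq_le x

lemma jbR_le_two_mul_abs {x : ℝ} (hx : 1 ≤ |x|) : jbR x ≤ 2 * |x| := by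
  linarith [jbR_le_one_add_abs x]

lemma jbR_le_jbR_of_abs_le {x y : ℝ} (h : |x| ≤ |y|) : jbR x ≤ jbR y :=
  Real.sqrt_le_sqrt (add_le_add_right (sq_le_sq.mpr h) 1)

lemma jbR_add_le (x y : ℝ) : jbR (x + y) ≤ jbR x + jbR y := by
  have hxy : x * y ≤ jbR x * jbR y :=
    calc x * y ≤ |x| * |y| := (le_abs_self _).trans_eq (abs_mul x y)
      _ ≤ jbR x * jbR y := by
        gcongr
        exacts [(jbR_pos x).le, abs_le_jbR x, abs_le_jbR y]
  refine le_of_sq_le_sq ?_ (add_pos (jbR_pos x) (jbR_pos y)).le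
  nlinarith [jbR_sq x, jbR_sq y, jbR_sq (x + y)]

lemma jbR_add_le_two_mul (x y : ℝ) : jbR (x + y) ≤ 2 * (jbR x * jbR y) := by
  nlinarith [jbR_add_le x y, one_le_jbR x, one_le_jbR y]

lemma jbR_mul_jbR_le_of_four_mul_abs_le {d s σ : ℝ} (hd : 1 ≤ |d|) (hs : 1 ≤ |s|)
    (hσ : 4 * |σ| ≤ |s|) : jbR d * jbR s ≤ 8 * jbR (d * s + σ * jbR d) := by
  have hwave : |σ * jbR d| ≤ |d| * |s| / 2 :=
    calc |σ * jbR d| = |σ| * jbR d := by rw [abs_mul, abs_of_pos (jbR_pos d)]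
      _ ≤ |s| / 4 * (2 * |d|) :=
        mul_le_mul (by linarith) (jbR_le_two_mul_abs hd) (jbR_pos d).le (by positivity)
      _ = |d| * |s| / 2 := by ring
  have hphase : |d| * |s| / 2 ≤ jbR (d * s + σ * jbR d) :=
    calc |d| * |s| / 2 ≤ |d * s| - |σ * jbR d| := by rw [abs_mul d s]; linarith
      _ ≤ |d * s + σ * jbR d| := by
        simpa only [abs_neg, sub_neg_eq_add] using abs_sub_abs_le_abs_sub (d * s) (-(σ * jbR d))
      _ ≤ _ := abs_le_jbR _
  calc jbR d * jbR s ≤ 2 * |d| * (2 * |s|) :=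
        mul_le_mul (jbR_le_two_mul_abs hd) (jbR_le_two_mul_abs hs) (jbR_pos s).le (by positivity)
    _ ≤ 8 * jbR (d * s + σ * jbR d) := by linarith

lemma jbR_div_mul_le_of_jbR_mul_jbR_le {x y p K : ℝ}
    (hK : jbR (x - y) * jbR (x + y) ≤ K * jbR p) :
    jbR x / (jbR p * jbR y) ≤
      K * ((jbR y ^ 2)⁻¹ + (jbR (x - y) ^ 2)⁻¹ + (jbR (x + y) ^ 2)⁻¹) := by
  have hx : jbR x ≤ jbR (x - y) + jbR (x + y) :=
    calc jbR x ≤ jbR (x - y + (x + y)) :=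
          jbR_le_jbR_of_abs_le (by
            rw [show x - y + (x + y) = 2 * x by ring, abs_mul, abs_two]
            linarith [abs_nonneg x])
      _ ≤ _ := jbR_add_le _ _
  have hp := jbR_pos p
  have hy := jbR_pos y
  have hd := jbR_pos (x - y)
  have hs := jbR_pos (x + y)
  have hK₀ : 0 < K := pos_of_mul_pos_left ((mul_pos hd hs).trans_le hK) hp.le
  have hpinv : (jbR p)⁻¹ ≤ K * ((jbR (x - y))⁻¹ * (jbR (x + y))⁻¹) := by
    rw [← mul_inv, ← div_eq_mul_inv, le_div_iff₀ (by positivity), inv_mul_le_iff₀ hp]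
    linarith
  calc jbR x / (jbR p * jbR y)
      = jbR x * (jbR p)⁻¹ * (jbR y)⁻¹ := by rw [div_eq_mul_inv, mul_inv, mul_assoc]
    _ ≤ (jbR (x - y) + jbR (x + y)) * (K * ((jbR (x - y))⁻¹ * (jbR (x + y))⁻¹)) * (jbR y)⁻¹ := by
      gcongr
    _ = K * ((jbR (x + y))⁻¹ * (jbR y)⁻¹ + (jbR (x - y))⁻¹ * (jbR y)⁻¹) := by
      field_simp
    _ ≤ _ := by
      simp only [← inv_pow]
      refine mul_le_mul_of_nonneg_left ?_ hK₀.le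
      nlinarith [sq_nonneg ((jbR (x - y))⁻¹ - (jbR y)⁻¹), sq_nonneg ((jbR (x + y))⁻¹ - (jbR y)⁻¹)]

lemma jbR_add_div_mul_le_of_jbR_le {t y K : ℝ} (p : ℝ) (hK : jbR t ≤ K) :
    jbR (t + y) / (jbR p * jbR y) ≤ 2 * K ^ 3 * (jbR t ^ 2)⁻¹ := by
  have ht := jbR_pos t
  have hy := jbR_pos y
  calc jbR (t + y) / (jbR p * jbR y) ≤ 2 * (jbR t * jbR y) / (1 * jbR y) := by
        gcongr
        exacts [jbR_add_le_two_mul t y, one_le_jbR p]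
    _ = 2 * jbR t ^ 3 * (jbR t ^ 2)⁻¹ := by field_simp
    _ ≤ 2 * K ^ 3 * (jbR t ^ 2)⁻¹ := by gcongr

lemma jbR_div_jbR_phase_mul_le {σ M : ℝ} (hσ : |σ| ≤ M) (x y : ℝ) :
    jbR x / (jbR ((x - y) * (x + y) + σ * jbR (x - y)) * jbR y) ≤
      2 * (8 + 4 * M) ^ 3 * ((jbR y ^ 2)⁻¹ + (jbR (x - y) ^ 2)⁻¹ + (jbR (x + y) ^ 2)⁻¹) := by
  have hM : 0 ≤ M := (abs_nonneg σ).trans hσ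
  have hqy : 0 < (jbR y ^ 2)⁻¹ := inv_pos.mpr (pow_pos (jbR_pos y) 2)
  have hqd : 0 < (jbR (x - y) ^ 2)⁻¹ := inv_pos.mpr (pow_pos (jbR_pos _) 2)
  have hqs : 0 < (jbR (x + y) ^ 2)⁻¹ := inv_pos.mpr (pow_pos (jbR_pos _) 2)
  set p := (x - y) * (x + y) + σ * jbR (x - y)
  rcases lt_or_ge |x - y| 1 with hd | hd
  · have hdK : jbR (x - y) ≤ 8 + 4 * M := by linarith [jbR_le_one_add_abs (x - y)]
    have hbound := jbR_add_div_mul_le_of_jbR_le (y := y) p hdK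
    rw [sub_add_cancel] at hbound
    refine hbound.trans ?_
    gcongr
    linarith
  rcases lt_or_ge |x + y| (1 + 4 * M) with hs | hs
  · have hsK : jbR (x + y) ≤ 8 + 4 * M := by linarith [jbR_le_one_add_abs (x + y)]
    have hbound := jbR_add_div_mul_le_of_jbR_le (y := -y) p hsK
    rw [add_neg_cancel_right, jbR_neg] at hbound
    refine hbound.trans ?_
    gcongr
    linarith
  · have hprod := jbR_mul_jbR_le_of_four_mul_abs_le (σ := σ) hd (by linarith : 1 ≤ |x + y|)
      (by linarith)
    refine (jbR_div_mul_le_of_jbR_mul_jbR_le hprod).trans ?_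
    gcongr
    nlinarith [pow_nonneg hM 3, sq_nonneg M]

/-- The weight `⟨n₁⟩^{1/2} / (⟨Φ_σ⟩^{1/2} ⟨n₂⟩^{1/2})` of the trilinear estimate. -/
noncomputable def zakharovWeight (σ : ℝ) (n₁ n₂ : ℤ) : ℝ :=
  jbR n₁ ^ (1 / 2 : ℝ) / (jbR (PhiZak σ n₁ n₂) ^ (1 / 2 : ℝ) * jbR n₂ ^ (1 / 2 : ℝ))

lemma zakharovWeight_eq_sqrt (σ : ℝ) (n₁ n₂ : ℤ) :
    zakharovWeight σ n₁ n₂ = √(jbR n₁ / (jbR (PhiZak σ n₁ n₂) * jbR n₂)) := by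
  rw [Real.sqrt_div (jbR_pos _).le, Real.sqrt_mul (jbR_pos _).le]
  simp only [zakharovWeight, Real.sqrt_eq_rpow]

lemma PhiZak_eq (σ : ℝ) (n₁ n₂ : ℤ) :
    PhiZak σ n₁ n₂ = ((n₁ : ℝ) - n₂) * (n₁ + n₂) + σ * jbR ((n₁ : ℝ) - n₂) := by
  unfold PhiZak
  push_cast
  ring

lemma zakharovWeight_sq_le {σ M : ℝ} (hσ : |σ| ≤ M) (n₁ n₂ : ℤ) :
    zakharovWeight σ n₁ n₂ ^ 2 ≤ 2 * (8 + 4 * M) ^ 3 *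
      ((jbR n₂ ^ 2)⁻¹ + (jbR (n₁ - n₂ : ℤ) ^ 2)⁻¹ + (jbR (n₁ + n₂ : ℤ) ^ 2)⁻¹) := by
  have hnonneg : 0 ≤ jbR n₁ / (jbR (PhiZak σ n₁ n₂) * jbR n₂) :=
    div_nonneg (jbR_pos _).le (mul_pos (jbR_pos _) (jbR_pos _)).le
  rw [zakharovWeight_eq_sqrt, Real.sq_sqrt hnonneg, PhiZak_eq, Int.cast_sub, Int.cast_add]
  exact jbR_div_jbR_phase_mul_le hσ n₁ n₂

lemma summable_inv_jbR_sq : Summable fun n : ℤ => (jbR n ^ 2)⁻¹ := by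
  have hsq : Summable fun n : ℤ => 1 / (n : ℝ) ^ 2 :=
    Real.summable_one_div_int_pow.mpr one_lt_two
  refine hsq.of_norm_bounded_eventually ?_
  filter_upwards [Filter.eventually_cofinite_ne (0 : ℤ)] with n hn
  have : (n : ℝ) ≠ 0 := Int.cast_ne_zero.mpr hn
  rw [jbR_sq, Real.norm_of_nonneg (by positivity), ← one_div]
  gcongr
  linarith

lemma tsum_ofReal_zakharovWeight_sq_le {σ M : ℝ} (hσ : |σ| ≤ M) (n₁ : ℤ) :
    ∑' n₂ : ℤ, ENNReal.ofReal (zakharovWeight σ n₁ n₂) ^ 2 ≤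
      ENNReal.ofReal (2 * (8 + 4 * M) ^ 3) * (3 * ∑' n : ℤ, ENNReal.ofReal (jbR n ^ 2)⁻¹) := by
  set q : ℤ → ℝ≥0∞ := fun n => ENNReal.ofReal (jbR n ^ 2)⁻¹
  have hM : 0 ≤ M := (abs_nonneg σ).trans hσ
  have hpointwise (n₂ : ℤ) : ENNReal.ofReal (zakharovWeight σ n₁ n₂) ^ 2 ≤
      ENNReal.ofReal (2 * (8 + 4 * M) ^ 3) * (q n₂ + q (n₁ - n₂) + q (n₁ + n₂)) := by
    rw [← ENNReal.ofReal_pow ((zakharovWeight_eq_sqrt σ n₁ n₂).symm ▸ Real.sqrt_nonneg _),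
      ← ENNReal.ofReal_add (by positivity) (by positivity),
      ← ENNReal.ofReal_add (by positivity) (by positivity), ← ENNReal.ofReal_mul (by positivity)]
    exact ENNReal.ofReal_le_ofReal (zakharovWeight_sq_le hσ n₁ n₂)
  have hsub : ∑' n₂, q (n₁ - n₂) = ∑' n, q n := (Equiv.subLeft n₁).tsum_eq q
  have hadd : ∑' n₂, q (n₁ + n₂) = ∑' n, q n := (Equiv.addLeft n₁).tsum_eq q
  refine (ENNReal.tsum_le_tsum hpointwise).trans_eq ?_
  rw [ENNReal.tsum_mul_left, ENNReal.tsum_add, ENNReal.tsum_add, hsub, hadd]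
  ring

lemma tsum_mul_le_Lp_mul_Lq {ι : Type*} {p q : ℝ} (hpq : p.HolderConjugate q) (u v : ι → ℝ≥0∞) :
    ∑' i, u i * v i ≤ (∑' i, u i ^ p) ^ (1 / p) * (∑' i, v i ^ q) ^ (1 / q) := by
  let _ : MeasurableSpace ι := ⊤
  simpa only [Pi.mul_apply, MeasureTheory.lintegral_count] using
    ENNReal.lintegral_mul_le_Lp_mul_Lq MeasureTheory.Measure.count hpq
      (f := u) (g := v) measurable_from_top.aemeasurable measurable_from_top.aemeasurable

lemma tsum_mul_mul_mul_le_of_tsum_sq_le {G : Type*} [AddGroup G] {w : G → G → ℝ≥0∞} {A : ℝ≥0∞}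
    (hw : ∀ a, ∑' b, w a b ^ 2 ≤ A) (f g h : G → ℝ≥0∞) :
    ∑' p : G × G, w p.1 p.2 * f (p.1 - p.2) * g p.1 * h p.2 ≤
      A ^ (1 / 2 : ℝ) * ((∑' a, f a ^ 2) ^ (1 / 2 : ℝ) * (∑' a, g a ^ 2) ^ (1 / 2 : ℝ) *
        (∑' a, h a ^ 2) ^ (1 / 2 : ℝ)) := by
  have hwg : ∑' p : G × G, (w p.1 p.2 * g p.1) ^ 2 ≤ A * ∑' a, g a ^ 2 := by
    rw [ENNReal.tsum_prod', ← ENNReal.tsum_mul_left]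
    simp only [mul_pow, ENNReal.tsum_mul_right]
    gcongr with a
    exact hw a
  have hfh : ∑' p : G × G, (f (p.1 - p.2) * h p.2) ^ 2 = (∑' a, f a ^ 2) * ∑' a, h a ^ 2 := by
    rw [ENNReal.tsum_prod', ENNReal.tsum_comm, ← ENNReal.tsum_mul_left]
    simp only [mul_pow, ENNReal.tsum_mul_right]
    exact tsum_congr fun b => congrArg (· * h b ^ 2) ((Equiv.subRight b).tsum_eq fun a => f a ^ 2)
  calc ∑' p : G × G, w p.1 p.2 * f (p.1 - p.2) * g p.1 * h p.2
      = ∑' p : G × G, (w p.1 p.2 * g p.1) * (f (p.1 - p.2) * h p.2) :=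
        tsum_congr fun p => by ring
    _ ≤ (∑' p : G × G, (w p.1 p.2 * g p.1) ^ 2) ^ (1 / 2 : ℝ) *
        (∑' p : G × G, (f (p.1 - p.2) * h p.2) ^ 2) ^ (1 / 2 : ℝ) := by
      simpa only [ENNReal.rpow_two] using tsum_mul_le_Lp_mul_Lq Real.HolderConjugate.two_two _ _
    _ ≤ (A * ∑' a, g a ^ 2) ^ (1 / 2 : ℝ) *
        ((∑' a, f a ^ 2) * ∑' a, h a ^ 2) ^ (1 / 2 : ℝ) := by
      rw [hfh]
      gcongr
    _ = _ := by
      simp only [ENNReal.mul_rpow_of_nonneg _ _ one_half_pos.le]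
      ring

theorem Zakharov_W1_general (M : ℝ) :
    ∃ C : ℝ, 0 < C ∧ ∀ σ : ℝ, |σ| ≤ M → ∀ f g h : ℤ → ℝ≥0,
      ∑' p : ℤ × ℤ, ENNReal.ofReal (zakharovWeight σ p.1 p.2) *
          (f (p.1 - p.2) : ℝ≥0∞) * (g p.1 : ℝ≥0∞) * (h p.2 : ℝ≥0∞)
        ≤ ENNReal.ofReal C * (l2Z f * l2Z g * l2Z h) := by
  set A : ℝ≥0∞ :=
    ENNReal.ofReal (2 * (8 + 4 * M) ^ 3) * (3 * ∑' n : ℤ, ENNReal.ofReal (jbR n ^ 2)⁻¹)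
  have hA : A ≠ ⊤ := ENNReal.mul_ne_top ENNReal.ofReal_ne_top
    (ENNReal.mul_ne_top ENNReal.ofNat_ne_top summable_inv_jbR_sq.tsum_ofReal_ne_top)
  have hsqrtA : A ^ (1 / 2 : ℝ) ≠ ⊤ := ENNReal.rpow_ne_top_of_nonneg one_half_pos.le hA
  refine ⟨(A ^ (1 / 2 : ℝ)).toReal + 1, by positivity, fun σ hσ f g h => ?_⟩
  have hC : A ^ (1 / 2 : ℝ) ≤ ENNReal.ofReal ((A ^ (1 / 2 : ℝ)).toReal + 1) :=
    (ENNReal.le_ofReal_iff_toReal_le hsqrtA (by positivity)).mpr (lt_add_one _).le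
  exact (tsum_mul_mul_mul_le_of_tsum_sq_le (tsum_ofReal_zakharovWeight_sq_le hσ) _ _ _).trans
    (mul_le_mul_left hC _)

/-- The Zakharov trilinear weight estimate with weight
`⟨n₁⟩^{1/2} / (⟨Φ_σ⟩^{1/2} ⟨n₂⟩^{1/2})`. -/
theorem Zakharov_W1 :
    ∃ C : ℝ, 0 < C ∧
      ∀ σ : ℝ, (σ = 1 ∨ σ = -1) →
        ∀ f g h : ℤ → ℝ≥0,
          Summable (fun n => f n ^ 2) → Summable (fun n => g n ^ 2) →
          Summable (fun n => h n ^ 2) →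
          (∑' p : ℤ × ℤ,
              ENNReal.ofReal (jbR (p.1 : ℝ) ^ (1/2 : ℝ) /
                  (jbR (PhiZak σ p.1 p.2) ^ (1/2 : ℝ) * jbR (p.2 : ℝ) ^ (1/2 : ℝ))) *
                (f (p.1 - p.2) : ℝ≥0∞) * (g p.1 : ℝ≥0∞) * (h p.2 : ℝ≥0∞))
            ≤ ENNReal.ofReal C * (l2Z f * l2Z g * l2Z h) := by
  obtain ⟨C, hC, hbound⟩ := Zakharov_W1_general 1
  exact ⟨C, hC, fun σ hσ f g h _ _ _ => hbound σ (by rcases hσ with rfl | rfl <;> simp) f g h⟩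
end
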